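/- For a unimodular lattice L of rank n, the square length (v,v) of any characteristic vector v of L is congruent to n modulo 8. -/

import Mathlib

open scoped RealInnerProductSpace

/-!
Let `M ⊆ L` be spanned by pairwise orthogonal vectors `eᵢ` of even norm `Nᵢ`, all of them in `2L`.
The Gauss sum `∑ exp (πi (x, x))` over `x ∈ M*/M` is evaluated in two ways.

* As `M*/M = ∏ ℤ/Nᵢ`, it is a product of sums `∑ exp (πi a² / N)` over `a ∈ ℤ/N`, each equal to
  `√N exp (πi/4)`; this gives `√|M*/M| exp (πi n/4)`.
* For a characteristic vector `v`, `eᵢ ∈ 2L` puts `v/2` in `M*`. Translating the summation variable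
  by `v/2 + h` and averaging over `h ∈ L/M`, which is its own orthogonal in `M*/M`, annihilates all
  terms outside `v/2 + L/M`; this gives `|L/M| exp (πi (v, v)/4)`.

Comparing arguments, `(v, v) ≡ n mod 8`, where `n` is the rank.

The one-dimensional sum is read off from the growth of `θ` at the cusp `1/N`: along
`τ = 1/N + it/N²` with `t → 0⁺`, splitting the theta series by residues modulo `N` gives
`√t θ(τ) → ∑ exp (πi a² / N)`, whereas `τ ↦ -1/τ ↦ -1/τ + N ↦ -1/(-1/τ + N) = i/t - 1/N` moves the
cusp to `i∞`, where `θ → 1`.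
-/

open Complex Filter Topology HurwitzZeta

theorem ofReal_mul_cpow {r : ℝ} (hr : 0 < r) {z : ℂ} (hz : z ≠ 0) (s : ℂ) :
    (r * z) ^ s = (r : ℂ) ^ s * z ^ s := by
  have hr' : (r : ℂ) ≠ 0 := ofReal_ne_zero.mpr hr.ne'
  rw [cpow_def_of_ne_zero (mul_ne_zero hr' hz), cpow_def_of_ne_zero hr', cpow_def_of_ne_zero hz,
    log_ofReal_mul hr hz, ofReal_log hr.le, add_mul, Complex.exp_add]

theorem exp_two_pi_mul_I_mul_eq_one_iff (r : ℝ) :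
    cexp (2 * Real.pi * I * r) = 1 ↔ ∃ k : ℤ, r = k := by
  rw [Complex.exp_eq_one_iff]
  refine exists_congr fun k => ?_
  rw [mul_comm, mul_left_inj' Complex.two_pi_I_ne_zero]
  norm_cast

theorem exists_int_sub_eq_two_pi_mul_of_mul_exp_eq {r s α β : ℝ} (hr : 0 < r) (hs : 0 < s)
    (h : r * cexp (α * I) = s * cexp (β * I)) : ∃ k : ℤ, α - β = 2 * Real.pi * k := by
  have hangle {c : ℝ} (hc : 0 < c) (θ : ℝ) : (arg (c * cexp (θ * I)) : Real.Angle) = θ := by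
    simpa [Complex.exp_mul_I] using Complex.arg_mul_cos_add_sin_mul_I_coe_angle hc θ
  rw [← Real.Angle.angle_eq_iff_two_pi_dvd_sub, ← hangle hr α, h, hangle hs]

theorem jacobiTheta_add_natCast_of_even {N : ℕ} (hN : Even N) (τ : ℂ) :
    jacobiTheta (τ + N) = jacobiTheta τ := by
  obtain ⟨m, rfl⟩ := hN
  have periodic : Function.Periodic jacobiTheta 2 := fun τ => by
    rw [add_comm, jacobiTheta_two_add]
  simpa [mul_two] using periodic.nat_mul m τ

theorem jacobiTheta_neg_one_div {τ : ℂ} (hτ : τ ≠ 0) :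
    jacobiTheta (-1 / τ) = (-I * τ) ^ (1 / 2 : ℂ) * jacobiTheta τ := by
  have hne : (-I * τ) ^ (1 / 2 : ℂ) ≠ 0 := by simp [cpow_eq_zero_iff, hτ]
  rw [jacobiTheta_eq_jacobiTheta₂ τ, jacobiTheta₂_functional_equation, zero_div,
    zero_pow two_ne_zero, mul_zero, zero_div, Complex.exp_zero, mul_one, one_div ((-I * τ) ^ _),
    mul_inv_cancel_left₀ hne, jacobiTheta_eq_jacobiTheta₂]

theorem tendsto_jacobiTheta_comap_im_atTop :
    Tendsto jacobiTheta (comap im atTop) (𝓝 1) := by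
  have decay : Tendsto (fun τ : ℂ => Real.exp (-Real.pi * τ.im)) (comap im atTop) (𝓝 0) :=
    Real.tendsto_exp_atBot.comp
      (tendsto_comap.const_mul_atTop_of_neg (neg_lt_zero.mpr Real.pi_pos))
  simpa using (isBigO_at_im_infty_jacobiTheta_sub_one.trans_tendsto decay).add_const 1

theorem tendsto_cosKernel_atTop (a : UnitAddCircle) : Tendsto (cosKernel a) atTop (𝓝 1) := by
  obtain ⟨p, hp, hO⟩ := isBigO_atTop_cosKernel_sub a
  have decay : Tendsto (fun t => Real.exp (-p * t)) atTop (𝓝 0) :=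
    Real.tendsto_exp_atBot.comp (tendsto_id.const_mul_atTop_of_neg (neg_lt_zero.mpr hp))
  simpa using (hO.trans_tendsto decay).add_const 1

theorem tendsto_sqrt_mul_evenKernel_zero (a : UnitAddCircle) :
    Tendsto (fun t => √t * evenKernel a t) (𝓝[>] 0) (𝓝 1) := by
  refine ((tendsto_cosKernel_atTop a).comp tendsto_inv_nhdsGT_zero).congr' ?_
  filter_upwards [self_mem_nhdsWithin] with t ht
  have hsqrt : √t ≠ 0 := (Real.sqrt_pos.mpr ht).ne'
  rw [Function.comp_apply, evenKernel_functional_equation, ← Real.sqrt_eq_rpow, one_div, one_div,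
    mul_inv_cancel_left₀ hsqrt]

section PeriodicSums

variable {N : ℕ} [NeZero N] (f : ZMod N → ℂ)

theorem hasSum_residueClass_mul_exp_neg_sq (a : ZMod N) {t : ℝ} (ht : 0 < t) :
    HasSum (fun n : ℤ => if (n : ZMod N) = a then f a * cexp (-Real.pi * (n / N) ^ 2 * t) else 0)
      (f a * evenKernel (a.val / N : ℝ) t) := by
  have hN : (N : ℂ) ≠ 0 := NeZero.ne _
  let e (m : ℤ) : ℤ := N * m + a.val
  have he : Function.Injective e := fun m n h => by simpa [e, NeZero.ne N] using h
  have hzero (n : ℤ) (hn : n ∉ Set.range e) :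
      (if (n : ZMod N) = a then f a * cexp (-Real.pi * (n / N) ^ 2 * t) else 0) = 0 := by
    refine if_neg fun hna => hn ?_
    have hdvd : (N : ℤ) ∣ n - a.val := by
      rw [← ZMod.intCast_zmod_eq_zero_iff_dvd]
      simp [hna]
    obtain ⟨m, hm⟩ := hdvd
    exact ⟨m, by simp only [e]; linarith⟩
  rw [← he.hasSum_iff hzero]
  have hcoset := (hasSum_ofReal.mpr (hasSum_int_evenKernel (a.val / N) ht)).mul_left (f a)
  refine hcoset.congr_fun fun m => ?_
  have hcast : ((e m : ℤ) : ZMod N) = a := by simp [e]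
  rw [Function.comp_apply, if_pos hcast]
  simp only [e]
  push_cast
  congr 5
  field_simp

theorem hasSum_periodic_mul_exp_neg_sq {t : ℝ} (ht : 0 < t) :
    HasSum (fun n : ℤ => f n * cexp (-Real.pi * (n / N) ^ 2 * t))
      (∑ a, f a * evenKernel (a.val / N : ℝ) t) := by
  simpa using hasSum_sum fun a (_ : a ∈ Finset.univ) => hasSum_residueClass_mul_exp_neg_sq f a ht

theorem tendsto_sqrt_mul_tsum_periodic_mul_exp_neg_sq :
    Tendsto (fun t : ℝ => √t * ∑' n : ℤ, f n * cexp (-Real.pi * (n / N) ^ 2 * t)) (𝓝[>] 0)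
      (𝓝 (∑ a, f a)) := by
  have hlim (a : ZMod N) : Tendsto (fun t : ℝ => f a * (√t * evenKernel (a.val / N : ℝ) t : ℝ))
      (𝓝[>] 0) (𝓝 (f a)) := by
    simpa using ((continuous_ofReal.tendsto 1).comp
      (tendsto_sqrt_mul_evenKernel_zero (a.val / N : ℝ))).const_mul (f a)
  refine (tendsto_finsetSum _ fun a _ => hlim a).congr' ?_
  filter_upwards [self_mem_nhdsWithin] with t ht
  rw [(hasSum_periodic_mul_exp_neg_sq f ht).tsum_eq, Finset.mul_sum]
  refine Finset.sum_congr rfl fun a _ => ?_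
  push_cast
  ring

end PeriodicSums

/-- The quadratic phase `a ↦ exp (π i a² / N)` on `ZMod N`, the value at `a` being computed from the
representative in `[0, N)`. For even `N` every representative gives the same value. -/
noncomputable def quadPhase (N : ℕ) (a : ZMod N) : ℂ := cexp (Real.pi * I * a.val ^ 2 / N)

section GaussSum

variable {N : ℕ} [NeZero N]

theorem quadPhase_intCast (hN : Even N) (k : ℤ) :
    quadPhase N k = cexp (Real.pi * I * k ^ 2 / N) := by
  obtain ⟨m, rfl⟩ := hN
  have hm : (m : ℂ) ≠ 0 := fun h => NeZero.ne (m + m) (by simpa using h)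
  obtain ⟨q, hq⟩ : ((m + m : ℕ) : ℤ) ∣ k - (k : ZMod (m + m)).val := by
    rw [← ZMod.intCast_zmod_eq_zero_iff_dvd]
    simp
  have hk : (k : ℂ) = (k : ZMod (m + m)).val + (m + m) * q := by
    exact_mod_cast eq_add_of_sub_eq' hq
  rw [quadPhase, eq_comm, Complex.exp_eq_exp_iff_exists_int]
  refine ⟨m * q ^ 2 + q * (k : ZMod (m + m)).val, ?_⟩
  rw [hk]
  push_cast
  field_simp
  ring

theorem quadPhase_add (hN : Even N) (a c : ZMod N) :
    quadPhase N (a + c) = quadPhase N a * quadPhase N c * ZMod.stdAddChar (a * c) := by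
  obtain ⟨k, rfl⟩ := ZMod.intCast_surjective a
  obtain ⟨l, rfl⟩ := ZMod.intCast_surjective c
  rw [← Int.cast_add, ← Int.cast_mul, ZMod.stdAddChar_coe]
  simp only [quadPhase_intCast hN, ← Complex.exp_add]
  congr 1
  push_cast
  ring

theorem jacobiTheta_one_div_add_eq_tsum_quadPhase (hN : Even N) (t : ℝ) :
    jacobiTheta (1 / N + I * t / N ^ 2) =
      ∑' n : ℤ, quadPhase N n * cexp (-Real.pi * (n / N) ^ 2 * t) := by
  refine tsum_congr fun n => ?_
  rw [quadPhase_intCast hN, ← Complex.exp_add]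
  congr 1
  linear_combination (Real.pi * n ^ 2 * t / N ^ 2) * I_sq

theorem jacobiTheta_double_inversion (hN : Even N) {t : ℝ} (ht : 0 < t) :
    (1 + I * t / N)⁻¹ ^ (1 / 2 : ℂ) * (-I * (1 / N + I * t / N ^ 2)) ^ (1 / 2 : ℂ) *
      (√t * jacobiTheta (1 / N + I * t / N ^ 2)) = jacobiTheta (I / t - 1 / N) := by
  have hN0 : (N : ℂ) ≠ 0 := NeZero.ne _
  have ht0 : (t : ℂ) ≠ 0 := ofReal_ne_zero.mpr ht.ne'
  set τ : ℂ := 1 / N + I * t / N ^ 2 with hτ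
  set z : ℂ := 1 + I * t / N with hz
  have hz0 : z ≠ 0 := fun h => by simpa [z] using congrArg re h
  have hτz : τ = z / N := by
    rw [hτ, hz]
    field_simp
  have hτ0 : τ ≠ 0 := hτz ▸ div_ne_zero hz0 hN0
  have hshift : -1 / τ + N = I * t / z := by
    rw [hτz]
    field_simp
    rw [hz]
    field_simp
    ring
  have hinv : -1 / (I * t / z) = I / t - 1 / N := by
    rw [hz]
    field_simp
    linear_combination -N * I_sq
  have hrot : -I * (I * t / z) = t * z⁻¹ := by
    linear_combination (-t * z⁻¹) * I_sq
  have hsqrt : (t : ℂ) ^ (1 / 2 : ℂ) = √t := by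
    rw [Real.sqrt_eq_rpow, ofReal_cpow ht.le]
    norm_num
  rw [← hinv, jacobiTheta_neg_one_div (by simp [ht0, hz0]), hrot,
    ofReal_mul_cpow ht (inv_ne_zero hz0), hsqrt, ← hshift, jacobiTheta_add_natCast_of_even hN,
    jacobiTheta_neg_one_div hτ0]
  ring

theorem neg_I_div_natCast_cpow_half :
    (-I / N) ^ (1 / 2 : ℂ) = (√N * cexp (Real.pi * I / 4))⁻¹ := by
  have hN : (0 : ℝ) < (N : ℝ)⁻¹ := inv_pos.mpr (Nat.cast_pos.mpr (NeZero.pos N))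
  have hI : -I ≠ 0 := neg_ne_zero.mpr I_ne_zero
  have hsqrt : ((N : ℝ)⁻¹ : ℂ) ^ (1 / 2 : ℂ) = (√N : ℂ)⁻¹ := by
    rw [← ofReal_inv, ← ofReal_inv, ← Real.sqrt_inv, Real.sqrt_eq_rpow, ofReal_cpow hN.le]
    norm_num
  rw [div_eq_inv_mul, ← ofReal_natCast, ← ofReal_inv, ofReal_mul_cpow hN hI, ofReal_inv, hsqrt,
    cpow_def_of_ne_zero hI, log_neg_I, mul_inv, ← Complex.exp_neg]
  congr 2
  ring

theorem tendsto_double_inversion_factor :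
    Tendsto (fun t : ℝ => (1 + I * t / N)⁻¹ ^ (1 / 2 : ℂ) *
      (-I * (1 / N + I * t / N ^ 2)) ^ (1 / 2 : ℂ)) (𝓝 0) (𝓝 ((-I / N) ^ (1 / 2 : ℂ))) := by
  have hcont : ContinuousAt (fun t : ℝ => (1 + I * t / N)⁻¹ ^ (1 / 2 : ℂ) *
      (-I * (1 / N + I * t / N ^ 2)) ^ (1 / 2 : ℂ)) 0 :=
    .mul (.cpow (.inv₀ (by fun_prop) (by simp)) (by fun_prop) (by simp))
      (.cpow (by fun_prop) (by fun_prop) (.inr (by simp [NeZero.ne N])))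
  simpa [div_eq_mul_inv] using hcont.tendsto

theorem sum_quadPhase (hN : Even N) :
    ∑ a : ZMod N, quadPhase N a = √N * cexp (Real.pi * I / 4) := by
  have htheta := tendsto_sqrt_mul_tsum_periodic_mul_exp_neg_sq (quadPhase N)
  simp only [← jacobiTheta_one_div_add_eq_tsum_quadPhase hN] at htheta
  have him : Tendsto (fun t : ℝ => (I / t - 1 / N : ℂ)) (𝓝[>] 0) (comap im atTop) :=
    tendsto_comap_iff.mpr (tendsto_inv_nhdsGT_zero.congr fun t => by simp)
  have hlim : Tendsto (fun t : ℝ => jacobiTheta (I / t - 1 / N)) (𝓝[>] 0)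
      (𝓝 ((-I / N) ^ (1 / 2 : ℂ) * ∑ a, quadPhase N a)) := by
    refine ((tendsto_double_inversion_factor.mono_left nhdsWithin_le_nhds).mul htheta).congr' ?_
    filter_upwards [self_mem_nhdsWithin] with t ht using jacobiTheta_double_inversion hN ht
  have hprod := tendsto_nhds_unique hlim (tendsto_jacobiTheta_comap_im_atTop.comp him)
  rw [neg_I_div_natCast_cpow_half] at hprod
  exact (eq_inv_of_mul_eq_one_right hprod).trans (inv_inv _)

end GaussSum

theorem sum_addSubgroup_addChar {A R : Type*} [AddCommGroup A] [CommRing R] [IsDomain R]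
    (H : AddSubgroup A) [Fintype H] (χ : AddChar A R) [Decidable (∀ h ∈ H, χ h = 1)] :
    ∑ h : H, χ h = if ∀ h ∈ H, χ h = 1 then (Nat.card H : R) else 0 := by
  classical
  have htriv : χ.compAddMonoidHom H.subtype = 0 ↔ ∀ h ∈ H, χ h = 1 := by
    simp [AddChar.ext_iff]
  simpa [htriv, Nat.card_eq_fintype_card] using (χ.compAddMonoidHom H.subtype).sum_eq_ite

theorem sum_eq_card_mul_of_orthogonal_eq_self {A R : Type*} [AddCommGroup A] [Fintype A]
    [CommRing R] [IsDomain R] [CharZero R] {q : A → R} {b : AddChar A (AddChar A R)}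
    (hq : ∀ a c, q (a + c) = q a * q c * b a c) {H : AddSubgroup A}
    (hH : ∀ a, a ∈ H ↔ ∀ h ∈ H, b a h = 1) {w : A} (hw : ∀ h ∈ H, q h * b w h = 1) :
    ∑ a, q a = Nat.card H * q w := by
  classical
  have htranslate (c : A) : ∑ a, q (a + c) = ∑ a, q a :=
    Fintype.sum_equiv (Equiv.addRight c) _ _ fun _ => rfl
  have hshift (a : A) (h : H) : q (a + w + h) = q (a + w) * b a h := by
    rw [hq (a + w), AddChar.map_add_eq_mul, AddChar.mul_apply]
    linear_combination q (a + w) * b a h * hw h h.2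
  have hmem (a : A) (ha : a ∈ H) : q (a + w) = q w := by
    rw [add_comm, hq, mul_assoc, hw a ha, mul_one]
  have hcard : (Nat.card H : R) ≠ 0 := Nat.cast_ne_zero.mpr Nat.card_pos.ne'
  apply mul_left_cancel₀ hcard
  calc Nat.card H * ∑ a, q a = ∑ h : H, ∑ a, q (a + (w + h)) := by
        simp [htranslate]
    _ = ∑ a, q (a + w) * ∑ h : H, b a h := by
        rw [Finset.sum_comm]
        simp only [← add_assoc, hshift, Finset.mul_sum]
    _ = ∑ a, if a ∈ H then q w * Nat.card H else 0 := by
        refine Finset.sum_congr rfl fun a _ => ?_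
        rw [sum_addSubgroup_addChar]
        simp only [← hH]
        split_ifs with ha
        · rw [hmem a ha]
        · rw [mul_zero]
    _ = Nat.card H * (Nat.card H * q w) := by
        rw [← Finset.sum_filter, Finset.sum_const, ← Fintype.card_subtype, nsmul_eq_mul,
          mul_comm (q w), Nat.card_eq_fintype_card]

section Lattice

variable {E : Type*} [NormedAddCommGroup E] [InnerProductSpace ℝ E]

/-- A `ℤ`-submodule of a real inner product space is unimodular if it coincides with its dual, the
set of vectors having integral inner product with all its elements. -/
def IsUnimodular (L : Submodule ℤ E) : Prop :=
  ∀ x : E, (∀ y ∈ L, ∃ k : ℤ, ⟪x, y⟫ = (k : ℝ)) ↔ x ∈ L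

/-- Characteristic vectors: those with `⟪v, x⟫ ≡ ⟪x, x⟫ mod 2` for all `x` in the lattice. -/
def IsCharacteristic (L : Submodule ℤ E) (v : E) : Prop :=
  ∀ x ∈ L, ∃ k : ℤ, ⟪v, x⟫ - ⟪x, x⟫ = 2 * (k : ℝ)

variable {L : Submodule ℤ E}

theorem IsUnimodular.exists_inner_eq_intCast (hL : IsUnimodular L) {x y : E} (hx : x ∈ L)
    (hy : y ∈ L) : ∃ k : ℤ, ⟪x, y⟫ = (k : ℝ) :=
  (hL x).mpr hx y hy

theorem IsCharacteristic.mem (hL : IsUnimodular L) {v : E} (hv : IsCharacteristic L v) : v ∈ L := by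
  refine (hL v).mp fun x hx => ?_
  obtain ⟨k, hk⟩ := hv x hx
  obtain ⟨m, hm⟩ := hL.exists_inner_eq_intCast hx hx
  exact ⟨2 * k + m, by push_cast; linarith⟩

theorem IsUnimodular.span_eq_top [FiniteDimensional ℝ E] (hL : IsUnimodular L) :
    Submodule.span ℝ (L : Set E) = ⊤ := by
  refine Submodule.orthogonal_eq_bot_iff.mp (Submodule.eq_bot_iff _ |>.mpr fun x hx => ?_)
  have hortho (y : E) (hy : y ∈ L) : ⟪x, y⟫ = 0 :=
    Submodule.inner_left_of_mem_orthogonal (Submodule.subset_span hy) hx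
  have hxL : x ∈ L := (hL x).mp fun y hy => ⟨0, by simp [hortho y hy]⟩
  exact inner_self_eq_zero.mp (hortho x hxL)

theorem exists_mem_ne_zero_forall_inner_eq_zero {ι : Type*} [Finite ι]
    (hint : ∀ x ∈ L, ∀ y ∈ L, ∃ k : ℤ, ⟪x, y⟫ = (k : ℝ)) {u : ι → E} (hmem : ∀ i, u i ∈ L)
    (hne : ∀ i, u i ≠ 0) (hortho : Pairwise fun i j => ⟪u i, u j⟫ = 0) {x : E} (hx : x ∈ L)
    (hxspan : x ∉ Submodule.span ℝ (Set.range u)) : ∃ y ∈ L, y ≠ 0 ∧ ∀ i, ⟪u i, y⟫ = 0 := by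
  classical
  have := Fintype.ofFinite ι
  choose m hm using fun i => hint _ (hmem i) _ (hmem i)
  choose p hp using fun i => hint _ (hmem i) _ hx
  have hm0 (i : ι) : (m i : ℝ) ≠ 0 := hm i ▸ inner_self_ne_zero.mpr (hne i)
  set D : ℤ := ∏ i, m i
  have hD (i : ι) : (D : ℝ) = m i * ∏ j ∈ Finset.univ.erase i, m j := by
    exact_mod_cast (Finset.mul_prod_erase _ m (Finset.mem_univ i)).symm
  set c : ι → ℤ := fun i => p i * ∏ j ∈ Finset.univ.erase i, m j
  have hxD : D • x ∉ Submodule.span ℝ (Set.range u) := by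
    have hD0 : (D : ℝ) ≠ 0 := by simpa [D, Finset.prod_ne_zero_iff] using hm0
    rwa [← Int.cast_smul_eq_zsmul ℝ, Submodule.smul_mem_iff _ hD0]
  refine ⟨D • x - ∑ i, c i • u i, ?_, ?_, fun i => ?_⟩
  · exact L.sub_mem (L.smul_mem _ hx) (L.sum_mem fun i _ => L.smul_mem _ (hmem i))
  · refine fun h => hxD (sub_eq_zero.mp h ▸ Submodule.sum_mem _ fun i _ => ?_)
    exact zsmul_mem (Submodule.subset_span (Set.mem_range_self i)) _
  · simp only [inner_sub_right, inner_sum, ← Int.cast_smul_eq_zsmul ℝ, real_inner_smul_right]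
    rw [Fintype.sum_eq_single i fun j hj => by rw [hortho hj.symm, mul_zero], hp, hm, hD i]
    simp only [c]
    push_cast
    ring

theorem exists_orthogonal_family_mem
    (hint : ∀ x ∈ L, ∀ y ∈ L, ∃ k : ℤ, ⟪x, y⟫ = (k : ℝ))
    (hspan : Submodule.span ℝ (L : Set E) = ⊤) {n : ℕ} (hn : n ≤ Module.finrank ℝ E) :
    ∃ u : Fin n → E, (∀ i, u i ∈ L) ∧ (∀ i, u i ≠ 0) ∧
      Pairwise fun i j => ⟪u i, u j⟫ = 0 := by
  induction n with
  | zero => exact ⟨0, by simp⟩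
  | succ n ih =>
    obtain ⟨u, hmem, hne, hortho⟩ := ih (by omega)
    obtain ⟨x, hx, hxspan⟩ : ∃ x ∈ L, x ∉ Submodule.span ℝ (Set.range u) := by
      by_contra! hle
      have htop : Submodule.span ℝ (Set.range u) = ⊤ :=
        top_le_iff.mp (hspan ▸ Submodule.span_le.mpr hle)
      have hcard := finrank_range_le_card (R := ℝ) u
      rw [Set.finrank, htop, finrank_top, Fintype.card_fin] at hcard
      omega
    obtain ⟨y, hy, hy0, hyortho⟩ :=
      exists_mem_ne_zero_forall_inner_eq_zero hint hmem hne hortho hx hxspan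
    refine ⟨Fin.cons y u, ?_, ?_, ?_⟩
    · simpa [Fin.forall_fin_succ] using ⟨hy, hmem⟩
    · simpa [Fin.forall_fin_succ] using ⟨hy0, hne⟩
    · simpa [pairwise_fin_succ_iff, hyortho, real_inner_comm _ y] using hortho

theorem exists_orthogonal_basis_mem [FiniteDimensional ℝ E]
    (hint : ∀ x ∈ L, ∀ y ∈ L, ∃ k : ℤ, ⟪x, y⟫ = (k : ℝ))
    (hspan : Submodule.span ℝ (L : Set E) = ⊤) :
    ∃ u : Module.Basis (Fin (Module.finrank ℝ E)) ℝ E,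
      (∀ i, u i ∈ L) ∧ Pairwise fun i j => ⟪u i, u j⟫ = 0 := by
  obtain ⟨u, hmem, hne, hortho⟩ := exists_orthogonal_family_mem hint hspan le_rfl
  have hli : LinearIndependent ℝ u := linearIndependent_of_ne_zero_of_inner_eq_zero hne hortho
  have htop := hli.span_eq_top_of_card_eq_finrank' (Fintype.card_fin _)
  exact ⟨Module.Basis.mk hli htop.ge, by simpa using hmem, by simpa using hortho⟩

end Lattice

section DiagonalPhase

variable {ι : Type*} {N : ι → ℕ}

/-- Reduction of integral coordinates modulo `N`. -/
def residues (N : ι → ℕ) : (ι → ℤ) →+ ∀ i, ZMod (N i) :=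
  AddMonoidHom.piMap fun i => Int.castAddHom (ZMod (N i))

theorem residues_apply (k : ι → ℤ) (i : ι) : residues N k i = k i := rfl

theorem residues_surjective : Function.Surjective (residues N) :=
  Function.Surjective.piMap fun _ => ZMod.intCast_surjective

variable [Fintype ι]

/-- The quadratic phase `a ↦ exp (π i ∑ aᵢ² / Nᵢ)` on the discriminant group `∏ ℤ/Nᵢ` of the
lattice with diagonal Gram matrix `diag (Nᵢ)`. -/
noncomputable def diagPhase (N : ι → ℕ) (a : ∀ i, ZMod (N i)) : ℂ := ∏ i, quadPhase (N i) (a i)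

theorem sum_diagPhase [DecidableEq ι] [∀ i, NeZero (N i)] (hN : ∀ i, Even (N i)) :
    ∑ a, diagPhase N a = (∏ i, √(N i) : ℝ) * cexp (Real.pi * I / 4) ^ Fintype.card ι := by
  simp only [diagPhase, ← Fintype.prod_sum, sum_quadPhase (hN _), Finset.prod_mul_distrib]
  simp

/-- The pairing `(a, c) ↦ exp (2π i ∑ aᵢ cᵢ / Nᵢ)` on `∏ ℤ/Nᵢ`, the bicharacter polarizing
`diagPhase`. -/
noncomputable def diagPairing (N : ι → ℕ) [∀ i, NeZero (N i)] :
    AddChar (∀ i, ZMod (N i)) (AddChar (∀ i, ZMod (N i)) ℂ) where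
  toFun a :=
    { toFun c := ∏ i, ZMod.stdAddChar (a i * c i)
      map_zero_eq_one' := by simp
      map_add_eq_mul' c d := by
        simp [mul_add, AddChar.map_add_eq_mul, Finset.prod_mul_distrib] }
  map_zero_eq_one' := by ext; simp
  map_add_eq_mul' a c := by
    ext d
    simp [add_mul, AddChar.map_add_eq_mul, Finset.prod_mul_distrib]

theorem diagPairing_apply [∀ i, NeZero (N i)] (a c : ∀ i, ZMod (N i)) :
    diagPairing N a c = ∏ i, ZMod.stdAddChar (a i * c i) := rfl

theorem diagPhase_add [∀ i, NeZero (N i)] (hN : ∀ i, Even (N i)) (a c : ∀ i, ZMod (N i)) :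
    diagPhase N (a + c) = diagPhase N a * diagPhase N c * diagPairing N a c := by
  simp only [diagPhase, diagPairing_apply, Pi.add_apply, quadPhase_add (hN _),
    Finset.prod_mul_distrib]

theorem diagPhase_residues [∀ i, NeZero (N i)] (hN : ∀ i, Even (N i)) (k : ι → ℤ) :
    diagPhase N (residues N k) = cexp (Real.pi * I * ∑ i, (k i : ℂ) ^ 2 / N i) := by
  simp only [diagPhase, residues_apply, quadPhase_intCast (hN _), Finset.mul_sum,
    Complex.exp_sum, mul_div_assoc]

theorem diagPairing_residues [∀ i, NeZero (N i)] (k l : ι → ℤ) :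
    diagPairing N (residues N k) (residues N l) =
      cexp (2 * Real.pi * I * ∑ i, (k i * l i : ℂ) / N i) := by
  simp only [diagPairing_apply, residues_apply, ← Int.cast_mul, ZMod.stdAddChar_coe,
    Finset.mul_sum, Complex.exp_sum]
  simp [mul_div_assoc]

end DiagonalPhase

section DualPoint

variable {E ι : Type*} [NormedAddCommGroup E] [InnerProductSpace ℝ E] [Fintype ι]

/-- The vector `∑ i, (kᵢ / ⟪eᵢ, eᵢ⟫) eᵢ`. When the `eᵢ` form an orthogonal basis, it is the vector
with `⟪·, eᵢ⟫ = kᵢ`, and these vectors make up the dual of the lattice spanned by the `eᵢ`. -/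
noncomputable def dualPoint (e : ι → E) : (ι → ℤ) →ₗ[ℤ] E :=
  Fintype.linearCombination ℤ fun i => ⟪e i, e i⟫⁻¹ • e i

theorem inner_dualPoint_left (e : ι → E) (k : ι → ℤ) (x : E) :
    ⟪dualPoint e k, x⟫ = ∑ i, k i * ⟪e i, x⟫ / ⟪e i, e i⟫ := by
  simp only [dualPoint, Fintype.linearCombination_apply, ← Int.cast_smul_eq_zsmul ℝ, sum_inner,
    real_inner_smul_left]
  refine Finset.sum_congr rfl fun i _ => ?_
  ring

theorem inner_dualPoint_apply {e : ι → E} (hortho : Pairwise fun i j => ⟪e i, e j⟫ = 0) {i : ι}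
    (hne : e i ≠ 0) (k : ι → ℤ) : ⟪dualPoint e k, e i⟫ = k i := by
  rw [inner_dualPoint_left, Fintype.sum_eq_single i fun j hj => by simp [hortho hj],
    mul_div_cancel_right₀ _ (inner_self_ne_zero.mpr hne)]

theorem inner_dualPoint_dualPoint {e : ι → E} (hortho : Pairwise fun i j => ⟪e i, e j⟫ = 0)
    (hne : ∀ i, e i ≠ 0) (k l : ι → ℤ) :
    ⟪dualPoint e k, dualPoint e l⟫ = ∑ i, (k i * l i : ℝ) / ⟪e i, e i⟫ := by
  simp only [inner_dualPoint_left e k, real_inner_comm (dualPoint e l),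
    inner_dualPoint_apply hortho (hne _)]

theorem dualPoint_eq_of_inner_eq (e : Module.Basis ι ℝ E)
    (hortho : Pairwise fun i j => ⟪e i, e j⟫ = 0) {k : ι → ℤ} {x : E} (hx : ∀ i, ⟪x, e i⟫ = k i) :
    dualPoint e k = x :=
  InnerProductSpace.ext_inner_right_basis e fun i => by
    rw [inner_dualPoint_apply hortho (e.ne_zero i), hx]

end DualPoint

section GlueGroup

variable {E ι : Type*} [NormedAddCommGroup E] [InnerProductSpace ℝ E] [Fintype ι]

/-- The glue group `L / M` inside the discriminant group `M* / M ≃ ∏ ℤ/Nᵢ`, for `M` spanned by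
orthogonal vectors `eᵢ` with `⟪eᵢ, eᵢ⟫ = Nᵢ`: the residues of the points of `L` in `M*`. -/
noncomputable def glueGroup (L : Submodule ℤ E) (e : ι → E) (N : ι → ℕ) :
    AddSubgroup (∀ i, ZMod (N i)) :=
  (L.comap (dualPoint e)).toAddSubgroup.map (residues N)

variable {L : Submodule ℤ E} {N : ι → ℕ} [∀ i, NeZero (N i)]

theorem diagPhase_residues_eq_exp_inner {e : ι → E} (hortho : Pairwise fun i j => ⟪e i, e j⟫ = 0)
    (hnorm : ∀ i, ⟪e i, e i⟫ = N i) (hN : ∀ i, Even (N i)) (k : ι → ℤ) :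
    diagPhase N (residues N k) = cexp (Real.pi * I * ⟪dualPoint e k, dualPoint e k⟫) := by
  have hne (i : ι) : e i ≠ 0 := fun h => NeZero.ne (N i) (by simpa [h, eq_comm] using hnorm i)
  simp only [diagPhase_residues hN, inner_dualPoint_dualPoint hortho hne, hnorm]
  simp [sq]

theorem diagPairing_residues_eq_exp_inner {e : ι → E}
    (hortho : Pairwise fun i j => ⟪e i, e j⟫ = 0) (hnorm : ∀ i, ⟪e i, e i⟫ = N i) (k l : ι → ℤ) :
    diagPairing N (residues N k) (residues N l) =
      cexp (2 * Real.pi * I * ⟪dualPoint e k, dualPoint e l⟫) := by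
  have hne (i : ι) : e i ≠ 0 := fun h => NeZero.ne (N i) (by simpa [h, eq_comm] using hnorm i)
  simp only [diagPairing_residues, inner_dualPoint_dualPoint hortho hne, hnorm]
  simp

theorem diagPhase_mul_diagPairing_eq_one_of_mem_glueGroup {e : ι → E} (hL : IsUnimodular L)
    (hortho : Pairwise fun i j => ⟪e i, e j⟫ = 0) (hnorm : ∀ i, ⟪e i, e i⟫ = N i)
    (hN : ∀ i, Even (N i)) {m : ι → ℤ} (hm : IsCharacteristic L ((2 : ℝ) • dualPoint e m))
    {h : ∀ i, ZMod (N i)} (hh : h ∈ glueGroup L e N) :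
    diagPhase N h * diagPairing N (residues N m) h = 1 := by
  obtain ⟨k, hk, rfl⟩ := hh
  obtain ⟨r, hr⟩ := hm _ hk
  obtain ⟨s, hs⟩ := hL.exists_inner_eq_intCast hk hk
  rw [real_inner_smul_left] at hr
  have hphase : Real.pi * I * ⟪dualPoint e k, dualPoint e k⟫ +
      2 * Real.pi * I * ⟪dualPoint e m, dualPoint e k⟫ = 2 * Real.pi * I * (r + s : ℝ) := by
    have hsum : (r + s : ℝ) =
        ⟪dualPoint e k, dualPoint e k⟫ / 2 + ⟪dualPoint e m, dualPoint e k⟫ := by linarith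
    rw [hsum]
    push_cast
    ring
  rw [diagPhase_residues_eq_exp_inner hortho hnorm hN,
    diagPairing_residues_eq_exp_inner hortho hnorm, ← Complex.exp_add, hphase,
    exp_two_pi_mul_I_mul_eq_one_iff]
  exact ⟨r + s, by push_cast; rfl⟩

variable {e : Module.Basis ι ℝ E}

theorem mem_glueGroup_iff_forall_diagPairing_eq_one (hL : IsUnimodular L)
    (hmem : ∀ i, e i ∈ L) (hortho : Pairwise fun i j => ⟪e i, e j⟫ = 0)
    (hnorm : ∀ i, ⟪e i, e i⟫ = N i) (a : ∀ i, ZMod (N i)) :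
    a ∈ glueGroup L e N ↔ ∀ h ∈ glueGroup L e N, diagPairing N a h = 1 := by
  constructor
  · rintro ⟨k, hk, rfl⟩ _ ⟨l, hl, rfl⟩
    rw [diagPairing_residues_eq_exp_inner hortho hnorm, exp_two_pi_mul_I_mul_eq_one_iff]
    exact hL.exists_inner_eq_intCast hk hl
  · intro horthogonal
    obtain ⟨k, rfl⟩ := residues_surjective a
    refine ⟨k, (hL _).mp fun y hy => ?_, rfl⟩
    choose l hl using fun i => hL.exists_inner_eq_intCast hy (hmem i)
    obtain rfl := dualPoint_eq_of_inner_eq e hortho hl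
    rw [← exp_two_pi_mul_I_mul_eq_one_iff, ← diagPairing_residues_eq_exp_inner hortho hnorm]
    exact horthogonal _ ⟨l, hy, rfl⟩

theorem prod_sqrt_mul_exp_eq_card_glueGroup_mul_exp (hL : IsUnimodular L)
    (hmem : ∀ i, e i ∈ L) (hortho : Pairwise fun i j => ⟪e i, e j⟫ = 0)
    (hnorm : ∀ i, ⟪e i, e i⟫ = N i) (hN : ∀ i, Even (N i)) {m : ι → ℤ}
    (hm : IsCharacteristic L ((2 : ℝ) • dualPoint e m)) :
    (∏ i, √(N i) : ℝ) * cexp (Real.pi * I / 4) ^ Fintype.card ι =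
      Nat.card (glueGroup L e N) * cexp (Real.pi * I * ⟪dualPoint e m, dualPoint e m⟫) := by
  classical
  rw [← sum_diagPhase hN, ← diagPhase_residues_eq_exp_inner hortho hnorm hN]
  exact sum_eq_card_mul_of_orthogonal_eq_self (diagPhase_add hN)
    (mem_glueGroup_iff_forall_diagPairing_eq_one hL hmem hortho hnorm)
    fun _ => diagPhase_mul_diagPairing_eq_one_of_mem_glueGroup hL hortho hnorm hN hm

end GlueGroup

section NormModEight

variable {E : Type*} [NormedAddCommGroup E] [InnerProductSpace ℝ E] {L : Submodule ℤ E}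

theorem exists_int_four_mul_inner_dualPoint_sub_card {ι : Type*} [Fintype ι] {N : ι → ℕ}
    [∀ i, NeZero (N i)] {e : Module.Basis ι ℝ E} (hL : IsUnimodular L) (hmem : ∀ i, e i ∈ L)
    (hortho : Pairwise fun i j => ⟪e i, e j⟫ = 0) (hnorm : ∀ i, ⟪e i, e i⟫ = N i)
    (hN : ∀ i, Even (N i)) {m : ι → ℤ} (hm : IsCharacteristic L ((2 : ℝ) • dualPoint e m)) :
    ∃ k : ℤ, 4 * ⟪dualPoint e m, dualPoint e m⟫ - (Fintype.card ι : ℝ) = 8 * (k : ℝ) := by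
  have hgauss : (∏ i, √(N i) : ℝ) * cexp ((Fintype.card ι * (Real.pi / 4) : ℝ) * I) =
      (Nat.card (glueGroup L e N) : ℝ) *
        cexp ((Real.pi * ⟪dualPoint e m, dualPoint e m⟫ : ℝ) * I) := by
    have heval := prod_sqrt_mul_exp_eq_card_glueGroup_mul_exp hL hmem hortho hnorm hN hm
    rw [← Complex.exp_nat_mul] at heval
    convert heval using 3
    · push_cast
      ring
    · simp
    · push_cast
      ring
  have hprod : 0 < ∏ i, √(N i : ℝ) :=
    Finset.prod_pos fun i _ => Real.sqrt_pos.mpr (Nat.cast_pos.mpr (NeZero.pos (N i)))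
  have hcard : 0 < (Nat.card (glueGroup L e N) : ℝ) := Nat.cast_pos.mpr Nat.card_pos
  obtain ⟨k, hk⟩ := exists_int_sub_eq_two_pi_mul_of_mul_exp_eq hprod hcard hgauss
  refine ⟨-k, mul_left_cancel₀ Real.pi_ne_zero ?_⟩
  push_cast
  linear_combination -4 * hk

theorem IsUnimodular.exists_inner_self_eq_natCast (hL : IsUnimodular L) {x : E} (hx : x ∈ L) :
    ∃ n : ℕ, ⟪x, x⟫ = (n : ℝ) := by
  obtain ⟨k, hk⟩ := hL.exists_inner_eq_intCast hx hx
  have hk0 : 0 ≤ k := by exact_mod_cast hk ▸ real_inner_self_nonneg (x := x)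
  lift k to ℕ using hk0
  exact ⟨k, hk⟩

theorem IsUnimodular.exists_even_orthogonal_basis [FiniteDimensional ℝ E] (hL : IsUnimodular L) :
    ∃ (e : Module.Basis (Fin (Module.finrank ℝ E)) ℝ E) (N : Fin (Module.finrank ℝ E) → ℕ),
      (∀ i, ∃ y ∈ L, e i = (2 : ℝ) • y) ∧ (Pairwise fun i j => ⟪e i, e j⟫ = 0) ∧
        (∀ i, ⟪e i, e i⟫ = N i) ∧ ∀ i, Even (N i) := by
  obtain ⟨u, hmem, hortho⟩ :=
    exists_orthogonal_basis_mem (fun _ hx _ hy => hL.exists_inner_eq_intCast hx hy) hL.span_eq_top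
  choose s hs using fun i => hL.exists_inner_self_eq_natCast (hmem i)
  let e := u.isUnitSMul fun _ => isUnit_iff_ne_zero.mpr (two_ne_zero (α := ℝ))
  have he (i : Fin _) : e i = (2 : ℝ) • u i := u.isUnitSMul_apply _ i
  refine ⟨e, fun i => 4 * s i, fun i => ⟨u i, hmem i, he i⟩, fun i j hij => ?_, fun i => ?_,
    fun i => (by decide : Even 4).mul_right _⟩
  · simp [he, real_inner_smul_left, real_inner_smul_right, hortho hij]
  · rw [he, real_inner_smul_left, real_inner_smul_right, hs]
    push_cast
    ring

theorem characteristic_norm_mod_eight_general [FiniteDimensional ℝ E] {v : E}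
    (hL : IsUnimodular L) (hv : IsCharacteristic L v) :
    ∃ k : ℤ, ⟪v, v⟫ - (Module.finrank ℝ E : ℝ) = 8 * (k : ℝ) := by
  obtain ⟨e, N, htwice, hortho, hnorm, hN⟩ := hL.exists_even_orthogonal_basis
  choose y hy he using htwice
  choose m hm using fun i => hL.exists_inner_eq_intCast (hv.mem hL) (hy i)
  have hmem (i : Fin _) : e i ∈ L := by simpa [he, two_smul] using L.add_mem (hy i) (hy i)
  have (i : Fin _) : NeZero (N i) := ⟨fun h => e.ne_zero i (by simpa [h] using hnorm i)⟩
  have hhalf : dualPoint e m = (1 / 2 : ℝ) • v := dualPoint_eq_of_inner_eq e hortho fun i => by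
    rw [he, real_inner_smul_left, real_inner_smul_right, hm]
    ring
  obtain ⟨k, hk⟩ := exists_int_four_mul_inner_dualPoint_sub_card hL hmem hortho hnorm hN
    (m := m) (by simpa [hhalf] using hv)
  rw [hhalf, real_inner_smul_left, real_inner_smul_right, Fintype.card_fin] at hk
  exact ⟨k, by linarith⟩

end NormModEight

/-- For a unimodular lattice `L` of rank `n` in `ℝⁿ`, the square length of any
characteristic vector is congruent to `n` modulo `8`. -/
theorem characteristic_norm_mod_eight {n : ℕ}
    (L : Submodule ℤ (EuclideanSpace ℝ (Fin n)))
    (hint : ∀ x ∈ L, ∀ y ∈ L, ∃ k : ℤ, ⟪x, y⟫ = (k : ℝ))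
    (hfree : Module.Free ℤ ↥L)
    (hrank : Module.finrank ℤ ↥L = n)
    (huni : ∀ x : EuclideanSpace ℝ (Fin n),
      (∀ y ∈ L, ∃ k : ℤ, ⟪x, y⟫ = (k : ℝ)) ↔ x ∈ L)
    (v : EuclideanSpace ℝ (Fin n))
    (hv : ∀ x ∈ L, ∃ k : ℤ, ⟪v, x⟫ - ⟪x, x⟫ = 2 * (k : ℝ)) :
    ∃ k : ℤ, ⟪v, v⟫ - (n : ℝ) = 8 * (k : ℝ) := by
  simpa using characteristic_norm_mod_eight_general huni hv
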